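/- arXiv:2403.04289 — 2 statements merged into one kernel-verified Lean document; each statement's English description precedes it below -/
import Mathlib

section
/- Fix 0 ≤ i ≤ n. Every i-dimensional subspace V of F_q^n is contained in exactly t_i = [(q^i - 1)(q^i - q)···(q^i - q^{i-1}) · (q^n - q^i)···(q^n - q^{n-1})] / (i! (n-i)!) of the families G_B = {span(U) : U ⊆ B}, where B ranges over all (unordered) bases of F_q^n. -/
/-!
A linearly independent set `B` having a subset that spans `V` is the disjoint union of `B ∩ V`,
which is then a basis of `V`, and `B \ V`, which stays linearly independent modulo `V`; conversely
any two such sets can be glued. Both kinds of sets are counted through their orderings: a tuple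
that is linearly independent modulo `V` is a linearly independent tuple of `W ⧸ V` together with a
choice of lifts, and `(q ^ (n - i) - q ^ j) * q ^ i = q ^ n - q ^ (i + j)`.
-/

open Module Submodule
open scoped Nat

/-- Injective `ι`-indexed families with image `s` are the labellings of `s` by `ι`; this turns
the count of orderings of `s` into a count of bijections. -/
noncomputable def embeddingsOntoEquiv {ι α : Type*} [Fintype ι] (s : Finset α) :
    {f : ι ↪ α // Finset.univ.map f = s} ≃ (ι ≃ s) where
  toFun f := (Equiv.ofInjective f.1 f.1.injective).trans <|
    Equiv.subtypeEquivRight fun x ↦ by simp [← f.2]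
  invFun e := ⟨e.toEmbedding.trans (Function.Embedding.subtype _), by
    rw [← Finset.map_map, Finset.map_univ_equiv, Finset.univ_eq_attach, Finset.attach_map_val]⟩
  left_inv _ := rfl
  right_inv e := Equiv.ext fun _ ↦ Subtype.ext rfl

theorem natCard_embeddings_eq_mul_factorial {α : Type*} (P : Finset α → Prop) (k : ℕ) :
    Nat.card {f : Fin k ↪ α // P (Finset.univ.map f)} =
      Nat.card {s : Finset α // s.card = k ∧ P s} * k ! := by
  let orderings (s : {s : Finset α // s.card = k ∧ P s}) :
      {f : Fin k ↪ α // Finset.univ.map f = s} ≃ Equiv.Perm (Fin k) :=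
    (embeddingsOntoEquiv s.1).trans <|
      (Equiv.refl _).equivCongr (Finset.equivFinOfCardEq s.2.1)
  rw [← Nat.card_congr <| Equiv.sigmaSubtypeFiberEquivSubtype (fun f : Fin k ↪ α ↦
      Finset.univ.map f) (q := fun s ↦ s.card = k ∧ P s) (by simp),
    Nat.card_congr (Equiv.sigmaCongrRight orderings),
    Nat.card_congr (Equiv.sigmaEquivProd _ _), Nat.card_prod, Nat.card_perm, Nat.card_fin]

theorem natCard_finset_linearIndepOn_mul_factorial {R M α : Type*} [Semiring R] [Nontrivial R]
    [AddCommMonoid M] [Module R M] (v : α → M) (k : ℕ) :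
    Nat.card {s : Finset α // s.card = k ∧ LinearIndepOn R v (s : Set α)} * k ! =
      Nat.card {f : Fin k → α // LinearIndependent R (v ∘ f)} := by
  have indep_map_iff (f : Fin k ↪ α) :
      LinearIndepOn R v (Finset.univ.map f : Set α) ↔ LinearIndependent R (v ∘ f) := by
    rw [Finset.coe_map, Finset.coe_univ, Set.image_univ, linearIndepOn_range_iff f.injective]
  rw [← natCard_embeddings_eq_mul_factorial]
  exact Nat.card_congr
    { toFun f := ⟨f.1, (indep_map_iff f.1).1 f.2⟩
      invFun f := ⟨⟨f.1, f.2.injective.of_comp⟩, (indep_map_iff _).2 f.2⟩ }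

theorem natCard_mkQ_comp_eq_mul_pow {ι R M : Type*} [Finite ι] [Ring R] [AddCommGroup M]
    [Module R M] (V : Submodule R M) (P : (ι → M ⧸ V) → Prop) :
    Nat.card {f : ι → M // P (V.mkQ ∘ f)} =
      Nat.card {g : ι → M ⧸ V // P g} * Nat.card V ^ Nat.card ι := by
  let split : M ≃ (M ⧸ V) × V := AddSubgroup.addGroupEquivQuotientProdAddSubgroup
  let splitTuple : (ι → M) ≃ (ι → M ⧸ V) × (ι → V) :=
    (Equiv.piCongrRight fun _ ↦ split).trans (Equiv.arrowProdEquivProdArrow ..)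
  rw [← Nat.card_fun, ← Nat.card_prod]
  -- The first component of `split` is definitionally the quotient map, whence `Iff.rfl`.
  exact Nat.card_congr <|
    (splitTuple.subtypeEquiv (q := fun p ↦ P p.1) fun _ ↦ Iff.rfl).trans
      Equiv.prodSubtypeFstEquivSubtypeProd

section FiniteField

variable {K W : Type*} [DivisionRing K] [Fintype K] [AddCommGroup W] [Module K W] [Finite W]

theorem natCard_finset_linearIndepOn_id_mul_factorial {k : ℕ} (hk : k ≤ finrank K W) :
    Nat.card {s : Finset W // s.card = k ∧ LinearIndepOn K id (s : Set W)} * k ! =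
      ∏ j ∈ Finset.range k, (Fintype.card K ^ finrank K W - Fintype.card K ^ j) := by
  rw [natCard_finset_linearIndepOn_mul_factorial]
  simp only [Function.id_comp]
  rw [card_linearIndependent hk, Finset.prod_range]

theorem natCard_finset_linearIndepOn_mkQ_mul_factorial (V : Submodule K W) {m : ℕ}
    (hm : finrank K V + m ≤ finrank K W) :
    Nat.card {t : Finset W // t.card = m ∧ LinearIndepOn K V.mkQ (t : Set W)} * m ! =
      ∏ j ∈ Finset.Ico (finrank K V) (finrank K V + m),
        (Fintype.card K ^ finrank K W - Fintype.card K ^ j) := by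
  have finrank_eq := V.finrank_quotient_add_finrank
  have : Finite (W ⧸ V) := Finite.of_surjective _ V.mkQ_surjective
  have card_lifts : Nat.card V ^ m = ∏ _j : Fin m, Fintype.card K ^ finrank K V := by
    rw [Module.natCard_eq_pow_finrank (K := K), Nat.card_eq_fintype_card, Fin.prod_const]
  rw [natCard_finset_linearIndepOn_mul_factorial,
    natCard_mkQ_comp_eq_mul_pow V (LinearIndependent K ·), card_linearIndependent (by lia),
    Nat.card_fin, card_lifts, Finset.prod_Ico_eq_prod_range, Nat.add_sub_cancel_left,
    Finset.prod_range, ← Finset.prod_mul_distrib]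
  refine Finset.prod_congr rfl fun j _ ↦ ?_
  rw [Nat.sub_mul, ← pow_add, ← pow_add, finrank_eq, add_comm]

end FiniteField

section Splitting

theorem exists_subset_span_eq_iff {R M : Type*} [Semiring R] [AddCommMonoid M] [Module R M]
    {V : Submodule R M} [DecidablePred (· ∈ V)] {B : Finset M} :
    (∃ U ⊆ B, span R (U : Set M) = V) ↔ span R (B.filter (· ∈ V) : Set M) = V := by
  constructor
  · rintro ⟨U, hUB, rfl⟩
    refine le_antisymm (span_le.2 fun x hx ↦ (Finset.mem_filter.1 hx).2) (span_mono fun x hx ↦ ?_)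
    exact Finset.mem_filter.2 ⟨hUB hx, subset_span hx⟩
  · exact fun h ↦ ⟨_, Finset.filter_subset _ _, h⟩

theorem linearIndepOn_id_iff_of_span_inter_eq {R M : Type*} [Ring R] [AddCommGroup M] [Module R M]
    {V : Submodule R M} {B : Set M} (h : span R (B ∩ V) = V) :
    LinearIndepOn R id B ↔ LinearIndepOn R id (B ∩ V) ∧ LinearIndepOn R V.mkQ (B \ V) := by
  have union_iff := linearIndepOn_union_iff_quotient (R := R) (f := id)
    (Set.disjoint_sdiff_inter (s := B) (t := V)).symm
  rwa [Set.inter_union_sdiff, Set.image_id, h, Function.comp_id] at union_iff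

theorem linearIndepOn_id_image_iff {R M N : Type*} [Semiring R] [AddCommMonoid M] [Module R M]
    [AddCommMonoid N] [Module R N] {f : M →ₗ[R] N} (hf : Function.Injective f) {s : Set M} :
    LinearIndepOn R id (f '' s) ↔ LinearIndepOn R id s := by
  rw [← linearIndepOn_iff_image hf.injOn]
  exact f.linearIndepOn_iff_of_injOn (v := id) hf.injOn

variable {K W : Type*} [DivisionRing K] [AddCommGroup W] [Module K W]

theorem span_eq_iff_card_eq_finrank {V : Submodule K W} [Module.Finite K V] {s : Finset W}
    (hsV : (s : Set W) ⊆ V) (hs : LinearIndepOn K id (s : Set W)) :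
    span K (s : Set W) = V ↔ s.card = finrank K V := by
  rw [← finrank_span_finset_eq_card hs]
  exact ⟨fun h ↦ by rw [h], eq_of_le_of_finrank_eq (span_le.2 hsV)⟩

theorem linearIndepOn_id_and_exists_span_eq_iff (V : Submodule K W) [Module.Finite K V]
    [DecidablePred (· ∈ V)] (B : Finset W) :
    (LinearIndepOn K id (B : Set W) ∧ ∃ U ⊆ B, span K (U : Set W) = V) ↔
      ((B.subtype (· ∈ V)).card = finrank K V ∧
        LinearIndepOn K id (B.subtype (· ∈ V) : Set V)) ∧
      LinearIndepOn K V.mkQ (B.filter (· ∉ V) : Set W) := by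
  have coe_filter_mem : (B.filter (· ∈ V) : Set W) = ↑B ∩ ↑V := by ext; simp
  have coe_filter_notMem : (B.filter (· ∉ V) : Set W) = ↑B \ ↑V := by ext; simp
  have image_subtype : V.subtype '' (B.subtype (· ∈ V) : Set V) = ↑B ∩ ↑V := by
    ext; simp [and_comm]
  have span_iff (h : LinearIndepOn K id (↑B ∩ ↑V : Set W)) :
      span K (↑B ∩ ↑V : Set W) = V ↔ (B.filter (· ∈ V)).card = finrank K V := by
    rw [← coe_filter_mem] at h ⊢
    exact span_eq_iff_card_eq_finrank (fun x hx ↦ (Finset.mem_filter.1 hx).2) h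
  rw [exists_subset_span_eq_iff, coe_filter_mem, coe_filter_notMem, Finset.card_subtype,
    ← linearIndepOn_id_image_iff V.subtype_injective, image_subtype]
  constructor
  · rintro ⟨hB, hspan⟩
    obtain ⟨h_mem, h_notMem⟩ := (linearIndepOn_id_iff_of_span_inter_eq hspan).1 hB
    exact ⟨⟨(span_iff h_mem).1 hspan, h_mem⟩, h_notMem⟩
  · rintro ⟨⟨hcard, h_mem⟩, h_notMem⟩
    have hspan := (span_iff h_mem).2 hcard
    exact ⟨(linearIndepOn_id_iff_of_span_inter_eq hspan).2 ⟨h_mem, h_notMem⟩, hspan⟩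

/-- Splitting a finite set into its elements with property `p`, taken in the subtype, and the
remaining ones, kept in `α`. -/
def finsetEquivSubtypeProd {α : Type*} [DecidableEq α] (p : α → Prop) [DecidablePred p] :
    Finset α ≃ Finset {x // p x} × {t : Finset α // ∀ x ∈ t, ¬ p x} where
  toFun B := (B.subtype p, ⟨B.filter (¬ p ·), by simp⟩)
  invFun st := st.1.map (Function.Embedding.subtype p) ∪ st.2
  left_inv B := by simp [Finset.subtype_map, Finset.filter_union_filter_not_eq]
  right_inv := by
    rintro ⟨s, t, ht⟩
    ext x
    · simpa [x.2] using fun hx ↦ absurd x.2 (ht x hx)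
    · grind [Function.Embedding.subtype_apply]

theorem natCard_linearIndepOn_and_exists_span_eq (V : Submodule K W) [Module.Finite K V] (m : ℕ) :
    Nat.card {B : Finset W // B.card = finrank K V + m ∧ LinearIndepOn K id (B : Set W) ∧
        ∃ U ⊆ B, span K (U : Set W) = V} =
      Nat.card {s : Finset V // s.card = finrank K V ∧ LinearIndepOn K id (s : Set V)} *
        Nat.card {t : Finset W // t.card = m ∧ LinearIndepOn K V.mkQ (t : Set W)} := by
  classical
  have split_iff (B : Finset W) :
      (B.card = finrank K V + m ∧ LinearIndepOn K id (B : Set W) ∧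
        ∃ U ⊆ B, span K (U : Set W) = V) ↔
      ((B.subtype (· ∈ V)).card = finrank K V ∧
        LinearIndepOn K id (B.subtype (· ∈ V) : Set V)) ∧
      ((B.filter (· ∉ V)).card = m ∧ LinearIndepOn K V.mkQ (B.filter (· ∉ V) : Set W)) := by
    have card_eq := B.card_filter_add_card_filter_not (· ∈ V)
    rw [← Finset.card_subtype] at card_eq
    rw [linearIndepOn_id_and_exists_span_eq_iff]
    grind
  have notMem_of_linearIndepOn (t : Finset W) :
      t.card = m ∧ LinearIndepOn K V.mkQ (t : Set W) → ∀ x ∈ t, x ∉ V := by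
    rintro ⟨-, ht⟩ x hx hxV
    exact ht.ne_zero hx ((Quotient.mk_eq_zero V).2 hxV)
  rw [← Nat.card_prod]
  exact Nat.card_congr <| ((finsetEquivSubtypeProd (· ∈ V)).subtypeEquiv split_iff).trans <|
    Equiv.subtypeProdEquivProd.trans <|
      (Equiv.refl _).prodCongr <| Equiv.subtypeSubtypeEquivSubtype (notMem_of_linearIndepOn _)

end Splitting

theorem card_bases_containing_subspace_general {K W : Type*} [DivisionRing K] [Fintype K]
    [AddCommGroup W] [Module K W] [Finite W] (V : Submodule K W) {k : ℕ}
    (hVk : finrank K V ≤ k) (hk : k ≤ finrank K W) :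
    Nat.card {B : Finset W // B.card = k ∧ LinearIndepOn K id (B : Set W) ∧
        ∃ U ⊆ B, span K (U : Set W) = V} * ((finrank K V)! * (k - finrank K V)!) =
      (∏ j ∈ Finset.range (finrank K V), (Fintype.card K ^ finrank K V - Fintype.card K ^ j)) *
        ∏ j ∈ Finset.Ico (finrank K V) k, (Fintype.card K ^ finrank K W - Fintype.card K ^ j) := by
  obtain ⟨m, rfl⟩ := Nat.exists_eq_add_of_le hVk
  rw [natCard_linearIndepOn_and_exists_span_eq, Nat.add_sub_cancel_left, mul_mul_mul_comm,
    natCard_finset_linearIndepOn_id_mul_factorial le_rfl,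
    natCard_finset_linearIndepOn_mkQ_mul_factorial V hk]

/-- Every `i`-dimensional subspace `V` of `F_q^n` lies in exactly
`t_i = (q^i-1)⋯(q^i-q^{i-1})·(q^n-q^i)⋯(q^n-q^{n-1}) / (i!(n-i)!)` of the
families `G_B = {span(U) : U ⊆ B}`, as `B` ranges over unordered bases of `F_q^n`. -/
theorem card_bases_containing_subspace (F : Type*) [Field F] [Fintype F]
    (n i : ℕ) (hi : i ≤ n) (V : Submodule F (Fin n → F))
    (hV : Module.finrank F V = i) :
    Nat.card {B : Finset (Fin n → F) //
        B.card = n ∧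
        LinearIndependent F (fun x : ↥(B : Set (Fin n → F)) => (x : Fin n → F)) ∧
        ∃ U ⊆ B, Submodule.span F (U : Set (Fin n → F)) = V}
      * (i.factorial * (n - i).factorial) =
      (∏ j ∈ Finset.range i, (Fintype.card F ^ i - Fintype.card F ^ j)) *
        ∏ j ∈ Finset.Ico i n, (Fintype.card F ^ n - Fintype.card F ^ j) := by
  subst hV
  simpa [LinearIndepOn] using card_bases_containing_subspace_general V hi (by simp)
end

section
/- Suppose V is an intersecting k-Sperner family of subspaces of F_q^n with dim(W) ≤ ⌊n/2⌋ for every W ∈ V. Letting V_j = {W ∈ V : dim W = j}, the LYM-type inequality ∑_{j=1}^{⌊n/2⌋} |V_j| / [n-1 choose j-1]_q ≤ k holds. -/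
noncomputable def gaussBinom (q n k : ℕ) : ℚ :=
  ∏ i ∈ Finset.range k, ((q : ℚ) ^ (n - i) - 1) / ((q : ℚ) ^ (k - i) - 1)

/-!
Let `n + 1 = dim E`, let `q` be the order of the field, and write `U_j` for the members of
dimension `j` of a family `U`. Pushing an intersecting antichain up, one dimension at a time, into
the upper set it generates reduces the LYM inequality to two properties of an intersecting upper
set `U` in the lower half: normalized matching `|U_{j+1}| / [n, j] ≤ |U_{j+2}| / [n, j+1]` and the
Erdős–Ko–Rado bound `|U_{j+1}| ≤ [n, j]`.

Matching holds for every upper set with `|U_{j+2}| < [n, j+1]`, by induction on `n`, averaging over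
hyperplanes `ker φ`. Either the trace of `U` on `ker φ` is again that small, or few members of
`U_{j+2}` lie outside `ker φ`; counting the pairs `u ∈ A` with `φ u = 1` and `A` such a member then
bounds the members of `U_{j+1}` inside `ker φ`, each of which produces one `A = W ⊔ span {u}` for
every `u`.

If the Erdős–Ko–Rado bound failed at dimension `j + 1`, matching would carry the failure up to
dimension `n - j`, where the complements of the members of `U_{j+1}` are excluded from `U`. There
are many of these. Multiplication in a field extension provides a linear space of `q ^ dim T`
maps `E ⧸ T → T`, all injective except zero. Adding them to the projections onto `T` along its
complements in `U` gives pairwise different projections, so only one in `q ^ dim T` of the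
complements of `T` can belong to `U`. Together, `U` and the excluded subspaces of dimension
`n - j` outnumber all subspaces of that dimension.

A `k`-Sperner family is peeled into `k` antichains by successively removing its minimal elements.
-/

open Finset Module

section GaussBinom

variable {q : ℕ}

lemma pow_sub_one_pos (hq : 1 < q) {m : ℕ} (hm : m ≠ 0) : (0 : ℚ) < (q : ℚ) ^ m - 1 :=
  sub_pos.2 <| one_lt_pow₀ (by exact_mod_cast hq) hm

lemma gaussBinom_eq_div (q n k : ℕ) :
    gaussBinom q n k =
      (∏ i ∈ range k, ((q : ℚ) ^ (n - i) - 1)) / ∏ i ∈ range k, ((q : ℚ) ^ (i + 1) - 1) := by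
  rw [gaussBinom, prod_div_distrib, ← prod_range_reflect fun i ↦ (q : ℚ) ^ (i + 1) - 1]
  congr 1
  refine prod_congr rfl fun i hi ↦ ?_
  rw [mem_range] at hi
  rw [show k - 1 - i + 1 = k - i by lia]

@[simp]
lemma gaussBinom_zero_right (q n : ℕ) : gaussBinom q n 0 = 1 := by simp [gaussBinom]

lemma gaussBinom_succ_right_mul (hq : 1 < q) (n k : ℕ) :
    gaussBinom q n (k + 1) * ((q : ℚ) ^ (k + 1) - 1) =
      gaussBinom q n k * ((q : ℚ) ^ (n - k) - 1) := by
  have hk := (pow_sub_one_pos hq k.add_one_ne_zero).ne'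
  rw [gaussBinom_eq_div, gaussBinom_eq_div, prod_range_succ, prod_range_succ]
  field_simp

lemma gaussBinom_succ_succ_mul (hq : 1 < q) (n k : ℕ) :
    gaussBinom q (n + 1) (k + 1) * ((q : ℚ) ^ (k + 1) - 1) =
      gaussBinom q n k * ((q : ℚ) ^ (n + 1) - 1) := by
  have hk := (pow_sub_one_pos hq k.add_one_ne_zero).ne'
  rw [gaussBinom_eq_div, gaussBinom_eq_div, prod_range_succ', prod_range_succ _ k]
  simp only [Nat.add_sub_add_right, Nat.sub_zero]
  field_simp

lemma gaussBinom_succ_left_mul (hq : 1 < q) (n k : ℕ) :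
    gaussBinom q (n + 1) k * ((q : ℚ) ^ (n + 1 - k) - 1) =
      gaussBinom q n k * ((q : ℚ) ^ (n + 1) - 1) := by
  rw [← gaussBinom_succ_right_mul hq, gaussBinom_succ_succ_mul hq]

lemma gaussBinom_self (hq : 1 < q) (n : ℕ) : gaussBinom q n n = 1 :=
  prod_eq_one fun _ hi ↦ div_self
    (pow_sub_one_pos hq (Nat.sub_ne_zero_of_lt (mem_range.1 hi))).ne'

lemma gaussBinom_pos (hq : 1 < q) {n k : ℕ} (hkn : k ≤ n) : 0 < gaussBinom q n k :=
  prod_pos fun i hi ↦ by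
    rw [mem_range] at hi
    exact div_pos (pow_sub_one_pos hq (by lia)) (pow_sub_one_pos hq (by lia))

lemma gaussBinom_eq_zero_of_lt {n k : ℕ} (h : n < k) : gaussBinom q n k = 0 :=
  prod_eq_zero (mem_range.2 h) (by simp)

lemma gaussBinom_symm_add (hq : 1 < q) (a b : ℕ) :
    gaussBinom q (a + b) a = gaussBinom q (a + b) b := by
  induction a with
  | zero => simp [gaussBinom_self hq]
  | succ a ih =>
    refine mul_right_cancel₀ (pow_sub_one_pos hq a.add_one_ne_zero).ne' ?_
    rw [Nat.succ_add, gaussBinom_succ_succ_mul hq, ih, ← gaussBinom_succ_left_mul hq,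
      show a + b + 1 - b = a + 1 by lia]

lemma gaussBinom_succ_succ (hq : 1 < q) (n k : ℕ) :
    gaussBinom q (n + 1) (k + 1) =
      gaussBinom q n k + (q : ℚ) ^ (k + 1) * gaussBinom q n (k + 1) := by
  obtain hnk | hkn := lt_or_ge n k
  · simp [gaussBinom_eq_zero_of_lt, hnk, hnk.trans k.lt_add_one]
  refine mul_right_cancel₀ (pow_sub_one_pos hq k.add_one_ne_zero).ne' ?_
  rw [gaussBinom_succ_succ_mul hq, add_mul, mul_assoc, gaussBinom_succ_right_mul hq,
    show n + 1 = k + 1 + (n - k) by lia, pow_add]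
  ring

lemma gaussBinom_succ_succ' (hq : 1 < q) (n k : ℕ) :
    gaussBinom q (n + 1) (k + 1) =
      (q : ℚ) ^ (n - k) * gaussBinom q n k + gaussBinom q n (k + 1) := by
  obtain hnk | hkn := lt_or_ge n k
  · simp [gaussBinom_eq_zero_of_lt, hnk, hnk.trans k.lt_add_one]
  refine mul_right_cancel₀ (pow_sub_one_pos hq k.add_one_ne_zero).ne' ?_
  rw [gaussBinom_succ_succ_mul hq, add_mul, gaussBinom_succ_right_mul hq,
    show n + 1 = n - k + (k + 1) by lia, pow_add]
  ring

lemma div_gaussBinom_le_div_gaussBinom_succ_iff (hq : 1 < q) {n k : ℕ} (hkn : k < n) {x y : ℚ} :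
    x / gaussBinom q n k ≤ y / gaussBinom q n (k + 1) ↔
      x * ((q : ℚ) ^ (n - k) - 1) ≤ y * ((q : ℚ) ^ (k + 1) - 1) := by
  have hk := gaussBinom_pos hq hkn.le
  have hp := pow_sub_one_pos hq k.add_one_ne_zero
  have hratio : gaussBinom q n (k + 1) =
      gaussBinom q n k * ((q : ℚ) ^ (n - k) - 1) / ((q : ℚ) ^ (k + 1) - 1) :=
    eq_div_of_mul_eq hp.ne' (gaussBinom_succ_right_mul hq n k)
  rw [div_le_div_iff₀ hk (gaussBinom_pos hq hkn), hratio, mul_div_assoc', div_le_iff₀ hp,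
    mul_right_comm y, mul_left_comm x, mul_comm (gaussBinom q n k), mul_le_mul_iff_left₀ hk]

end GaussBinom

section Order

lemma intersecting_upperClosure {α : Type*} [SemilatticeInf α] [OrderBot α] {s : Set α}
    (hs : s.Intersecting) : (upperClosure s : Set α).Intersecting := by
  rintro a ⟨a', ha', haa'⟩ b ⟨b', hb', hbb'⟩ hab
  exact hs ha' hb' (hab.mono haa' hbb')

lemma sum_le_nsmul_of_forall_antichain {α M : Type*} [PartialOrder α] [AddCommMonoid M]
    [PartialOrder M] [IsOrderedAddMonoid M] (f : α → M) (c : M) {k : ℕ} {s : Finset α}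
    (hs : ∀ a : Fin (k + 1) → α, (∀ i, a i ∈ s) → ¬ StrictMono a)
    (hf : ∀ t ⊆ s, IsAntichain (· ≤ ·) (t : Set α) → ∑ x ∈ t, f x ≤ c) :
    ∑ x ∈ s, f x ≤ k • c := by
  classical
  induction k generalizing s with
  | zero =>
    have hempty : s = ∅ := eq_empty_of_forall_notMem fun x hx ↦
      hs (fun _ ↦ x) (fun _ ↦ hx) (Subsingleton.strictMono (α := Fin 1) _)
    simp [hempty]
  | succ k ih =>
    have hminimal : ∑ x ∈ s with Minimal (· ∈ s) x, f x ≤ c :=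
      hf _ (filter_subset _ _) <| (setOfPred_minimal_antichain (· ∈ s)).subset
        fun x hx ↦ (mem_filter.1 hx).2
    have hrest : ∑ x ∈ s with ¬ Minimal (· ∈ s) x, f x ≤ k • c := by
      refine ih (fun a ha hmono ↦ ?_) fun t ht ↦ hf t (ht.trans (filter_subset _ _))
      simp only [mem_filter] at ha
      obtain ⟨b, hba, hb⟩ := (not_minimal_iff_exists_lt (ha 0).1).1 (ha 0).2
      refine hs (Matrix.vecCons b a) (Fin.cases hb fun i ↦ (ha i).1) ?_
      exact strictMono_vecCons.2 ⟨hba, hmono⟩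
    rw [← sum_filter_add_sum_filter_not s (Minimal (· ∈ s)), succ_nsmul']
    exact add_le_add hminimal hrest

end Order

section FiniteVectorSpace

variable {F E : Type*} [Field F] [AddCommGroup E] [Module F E]

lemma natCard_preimage_singleton_of_surjective [FiniteDimensional F E] {E' : Type*}
    [AddCommGroup E'] [Module F E'] {f : E →ₗ[F] E'} (hf : Function.Surjective f) (y : E') :
    Nat.card (f ⁻¹' {y}) = Nat.card F ^ (finrank F E - finrank F E') := by
  have hker : finrank F E - finrank F E' = finrank F (LinearMap.ker f) := by
    rw [← LinearMap.finrank_range_add_finrank_ker f, LinearMap.range_eq_top.2 hf,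
      finrank_top, Nat.add_sub_cancel_left]
  rw [hker, ← Module.natCard_eq_pow_finrank]
  exact Nat.card_congr (AddMonoidHom.fiberEquivKerOfSurjective (f := f.toAddMonoidHom) hf y)

lemma ncard_mem_and_dual_eq_one {φ : Dual F E} {A : Submodule F E}
    [FiniteDimensional F A] (hA : ¬ A ≤ LinearMap.ker φ) :
    {u | u ∈ A ∧ φ u = 1}.ncard = Nat.card F ^ (finrank F A - 1) := by
  have hne : φ.domRestrict A ≠ 0 := fun h ↦ hA fun x hx ↦ LinearMap.congr_fun h ⟨x, hx⟩
  rw [← finrank_self F,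
    ← natCard_preimage_singleton_of_surjective (LinearMap.surjective hne) 1, ← Nat.card_coe_set_eq]
  exact Nat.card_congr
    (Equiv.subtypeSubtypeEquivSubtypeInter (· ∈ A) fun u ↦ φ u = 1).symm

lemma ncard_dual_ne_zero_and_le_ker [Finite F] [FiniteDimensional F E] (W : Submodule F E) :
    ({φ : Dual F E | φ ≠ 0 ∧ W ≤ LinearMap.ker φ}.ncard : ℚ) =
      (Nat.card F : ℚ) ^ (finrank F E - finrank F W) - 1 := by
  have hset : {φ : Dual F E | φ ≠ 0 ∧ W ≤ LinearMap.ker φ} =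
      (W.dualAnnihilator : Set (Dual F E)) \ {0} := by
    ext φ
    simp [Submodule.mem_dualAnnihilator, SetLike.le_def, and_comm]
  have hcodim : finrank F E - finrank F W = finrank F W.dualAnnihilator := by
    rw [← Subspace.finrank_add_finrank_dualAnnihilator_eq W, Nat.add_sub_cancel_left]
  have hpos : 1 ≤ Nat.card F ^ finrank F W.dualAnnihilator := Nat.one_le_pow _ _ Nat.card_pos
  rw [hset, Set.ncard_sdiff_singleton_of_mem (zero_mem W.dualAnnihilator), hcodim,
    ← Nat.card_coe_set_eq, SetLike.coe_sort_coe, Module.natCard_eq_pow_finrank (K := F),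
    Nat.cast_sub hpos]
  simp

lemma finrank_ker_of_ne_zero [FiniteDimensional F E] {n : ℕ} (hE : finrank F E = n + 1)
    {φ : Dual F E} (hφ : φ ≠ 0) : finrank F (LinearMap.ker φ) = n := by
  have := Module.Dual.finrank_ker_add_one_of_ne_zero hφ
  lia

end FiniteVectorSpace

section Complements

variable {F E : Type*} [Field F] [AddCommGroup E] [Module F E]

lemma eq_and_eq_of_projectionOnto_add_eq {T C C' : Submodule F E} {γ : T →ₗ[F] E ⧸ T →ₗ[F] T}
    (hγ : ∀ a ≠ 0, ∀ x ≠ 0, γ a x ≠ 0) (hC : IsCompl T C) (hC' : IsCompl T C')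
    (hCC' : ¬ Disjoint C C') {a a' : T}
    (h : T.projectionOnto C hC + γ a ∘ₗ T.mkQ = T.projectionOnto C' hC' + γ a' ∘ₗ T.mkQ) :
    C = C' ∧ a = a' := by
  have haa' : a = a' := by
    by_contra hne
    refine hCC' (Submodule.disjoint_def.2 fun x hx hx' ↦ ?_)
    have hx0 : γ (a - a') (T.mkQ x) = 0 := by
      simpa [Submodule.projectionOnto_apply_of_mem_right, hx, hx', sub_eq_zero]
        using LinearMap.congr_fun h x
    have hxT : x ∈ T := by
      by_contra hxT
      exact hγ _ (sub_ne_zero.2 hne) _ (by simpa using hxT) hx0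
    exact Submodule.disjoint_def.1 hC.disjoint x hxT hx
  subst haa'
  refine ⟨?_, rfl⟩
  rw [← Submodule.ker_projectionOnto hC, add_right_cancel h, Submodule.ker_projectionOnto]

lemma exists_linearMap₂_apply_ne_zero [Finite F] {Q T : Type*} [AddCommGroup Q] [Module F Q]
    [FiniteDimensional F Q] [AddCommGroup T] [Module F T] [FiniteDimensional F T]
    (h : finrank F Q ≤ finrank F T) :
    ∃ γ : T →ₗ[F] Q →ₗ[F] T, ∀ a ≠ 0, ∀ x ≠ 0, γ a x ≠ 0 := by
  obtain hT | hT := eq_or_ne (finrank F T) 0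
  · have := finrank_zero_iff.1 hT
    exact ⟨0, fun a ha ↦ (ha (Subsingleton.elim a 0)).elim⟩
  obtain ⟨p, _⟩ := CharP.exists F
  have : Fact p.Prime := ⟨CharP.char_is_prime F p⟩
  have : NeZero (finrank F T) := ⟨hT⟩
  have hK := FiniteField.finrank_extension F p (finrank F T)
  obtain ⟨ι, hι⟩ := finrank_le_iff_exists_linearMap.1 (h.trans_eq hK.symm)
  let e : T ≃ₗ[F] FiniteField.Extension F p (finrank F T) := LinearEquiv.ofFinrankEq _ _ hK.symm
  refine ⟨(LinearMap.mul F _).compl₁₂ e.toLinearMap ι |>.compr₂ e.symm.toLinearMap,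
    fun a ha x hx ↦ ?_⟩
  simpa [ha] using (map_ne_zero_iff ι hι).2 hx

variable [FiniteDimensional F E]

lemma ncard_isCompl (T : Submodule F E) :
    {C | IsCompl T C}.ncard = Nat.card F ^ ((finrank F E - finrank F T) * finrank F T) := by
  have hsurj : Function.Surjective (LinearMap.lcomp F T T.subtype) := fun g ↦ g.exists_extend
  rw [Nat.sub_mul, ← finrank_linearMap F F E T, ← finrank_linearMap F F T T,
    ← natCard_preimage_singleton_of_surjective hsurj LinearMap.id, ← Nat.card_coe_set_eq]
  refine Nat.card_congr (T.isComplEquivProj.trans (Equiv.subtypeEquivRight fun f ↦ ?_))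
  simp [LinearMap.ext_iff]

lemma ncard_inter_isCompl_mul_le [Finite F] {U : Set (Submodule F E)} (hU : U.Intersecting)
    {T : Submodule F E} (hT : finrank F E ≤ 2 * finrank F T) :
    (U ∩ {C | IsCompl T C}).ncard * Nat.card F ^ finrank F T ≤ {C | IsCompl T C}.ncard := by
  obtain ⟨γ, hγ⟩ := exists_linearMap₂_apply_ne_zero (F := F) (Q := E ⧸ T) (T := T) (by
    have := T.finrank_quotient_add_finrank
    lia)
  have : Finite E := Module.finite_of_finite F
  let shear (x : ↥(U ∩ {C | IsCompl T C}) × T) : {f : E →ₗ[F] T // ∀ t : T, f t = t} :=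
    ⟨T.projectionOnto x.1 x.1.2.2 + γ x.2 ∘ₗ T.mkQ, fun t ↦ by
      simp [(Submodule.Quotient.mk_eq_zero T).2 t.2]⟩
  have hinj : Function.Injective shear := by
    rintro ⟨⟨C, hCU, hC⟩, a⟩ ⟨⟨C', hCU', hC'⟩, a'⟩ h
    obtain ⟨rfl, rfl⟩ := eq_and_eq_of_projectionOnto_add_eq hγ hC hC' (hU hCU hCU')
      (Subtype.ext_iff.1 h)
    rfl
  have : Finite (E →ₗ[F] T) := Module.finite_of_finite F
  rw [← Module.natCard_eq_pow_finrank (K := F), ← Nat.card_coe_set_eq, ← Nat.card_prod,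
    ← Nat.card_coe_set_eq {C | IsCompl T C}]
  refine (Nat.card_le_card_of_injective shear hinj).trans_eq ?_
  exact Nat.card_congr T.isComplEquivProj.symm

end Complements

section DimLevel

variable {F E : Type*} [Field F] [AddCommGroup E] [Module F E]

/-- The members of `U` contained in `P`, as a family of subspaces of `P`. It serves to induct on the
dimension by restricting to hyperplanes. -/
def familyWithin (U : Set (Submodule F E)) (P : Submodule F E) : Set (Submodule F P) :=
  Submodule.map P.subtype ⁻¹' U

lemma isUpperSet_familyWithin {U : Set (Submodule F E)} (hU : IsUpperSet U) (P : Submodule F E) :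
    IsUpperSet (familyWithin U P) :=
  hU.preimage fun _ _ ↦ Submodule.map_mono

/-- The level of dimension `j` of a family `U` of subspaces: its members of dimension `j`, written
`U_j` on paper. -/
noncomputable def dimLevel [Finite E] (U : Set (Submodule F E)) (j : ℕ) :
    Finset (Submodule F E) :=
  (Set.toFinite {W | W ∈ U ∧ finrank F W = j}).toFinset

variable [Finite E] {U : Set (Submodule F E)} {W : Submodule F E} {j : ℕ}

@[simp]
lemma mem_dimLevel : W ∈ dimLevel U j ↔ W ∈ U ∧ finrank F W = j := by simp [dimLevel]

lemma dimLevel_mono {U' : Set (Submodule F E)} (h : U ⊆ U') (j : ℕ) :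
    dimLevel U j ⊆ dimLevel U' j := fun _ hW ↦ by
  rw [mem_dimLevel] at hW ⊢
  exact ⟨h hW.1, hW.2⟩

open Classical in
lemma card_dimLevel_familyWithin (U : Set (Submodule F E)) (P : Submodule F E) (j : ℕ) :
    #(dimLevel (familyWithin U P) j) = #{W ∈ dimLevel U j | W ≤ P} := by
  rw [← card_image_of_injective _ (Submodule.map_injective_of_injective P.subtype_injective)]
  congr 1
  ext W
  simp only [mem_image, mem_dimLevel, familyWithin, Set.mem_preimage, mem_filter]
  constructor
  · rintro ⟨A, ⟨hAU, rfl⟩, rfl⟩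
    exact ⟨⟨hAU, Submodule.finrank_map_subtype_eq P A⟩, Submodule.map_subtype_le P A⟩
  · rintro ⟨⟨hWU, rfl⟩, hWP⟩
    have hmap : (W.comap P.subtype).map P.subtype = W := by
      rw [Submodule.map_comap_subtype, inf_eq_right.2 hWP]
    refine ⟨W.comap P.subtype, ⟨hmap.symm ▸ hWU, ?_⟩, hmap⟩
    rw [← Submodule.finrank_map_subtype_eq, hmap]

open Classical in
lemma sum_card_dimLevel_familyWithin_ker [Finite F] [Fintype (Dual F E)]
    (U : Set (Submodule F E)) (j : ℕ) :
    ∑ φ : Dual F E with φ ≠ 0,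
        (#(dimLevel (familyWithin U (LinearMap.ker φ)) j) : ℚ) =
      #(dimLevel U j) * ((Nat.card F : ℚ) ^ (finrank F E - j) - 1) := by
  have hswap := sum_card_bipartiteAbove_eq_sum_card_bipartiteBelow
    (s := dimLevel U j) (t := {φ : Dual F E | φ ≠ 0}) fun W φ ↦ W ≤ LinearMap.ker φ
  simp only [bipartiteBelow, ← card_dimLevel_familyWithin] at hswap
  rw [← Nat.cast_sum, ← hswap, Nat.cast_sum, ← nsmul_eq_mul, ← sum_const]
  refine sum_congr rfl fun W hW ↦ ?_
  rw [← (mem_dimLevel.1 hW).2, ← ncard_dual_ne_zero_and_le_ker, bipartiteAbove, filter_filter,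
    ← Set.ncard_coe_finset, coe_filter_univ]

open Classical in
lemma card_dual_ne_zero [Finite F] [Fintype (Dual F E)] :
    (#{φ : Dual F E | φ ≠ 0} : ℚ) = (Nat.card F : ℚ) ^ finrank F E - 1 := by
  have h := ncard_dual_ne_zero_and_le_ker (⊥ : Submodule F E)
  simp only [bot_le, and_true, finrank_bot, Nat.sub_zero] at h
  rw [← h, ← Set.ncard_coe_finset, coe_filter_univ]

lemma card_dimLevel_univ [Finite F] {n : ℕ} (hE : finrank F E = n) (hj : j ≤ n) :
    (#(dimLevel (Set.univ : Set (Submodule F E)) j) : ℚ) = gaussBinom (Nat.card F) n j := by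
  have hq : 1 < Nat.card F := Finite.one_lt_card
  induction n, hj using Nat.le_induction generalizing E with
  | base =>
    have hlevel : dimLevel (Set.univ : Set (Submodule F E)) j = {⊤} := by
      ext W
      simp [← hE, Submodule.eq_top_iff_finrank_eq]
    rw [hlevel, card_singleton, Nat.cast_one, gaussBinom_self hq]
  | succ n hjn ih =>
    have : Finite (Dual F E) := Module.finite_of_finite F
    have := Fintype.ofFinite (Dual F E)
    classical
    refine mul_right_cancel₀
      (pow_sub_one_pos hq (Nat.sub_ne_zero_of_lt (Nat.lt_add_one_of_le hjn))).ne' ?_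
    rw [gaussBinom_succ_left_mul hq, ← hE, ← sum_card_dimLevel_familyWithin_ker,
      ← card_dual_ne_zero, mul_comm, ← nsmul_eq_mul, ← sum_const]
    refine sum_congr rfl fun φ hφ ↦ ?_
    exact ih (finrank_ker_of_ne_zero hE (mem_filter.1 hφ).2)

open Classical in
lemma card_dimLevel_le_ker_le_card_dimLevel_not_le_ker (hU : IsUpperSet U) {φ : Dual F E} {u : E}
    (hu : φ u = 1) :
    #{W ∈ dimLevel U j | W ≤ LinearMap.ker φ} ≤
      #{A ∈ dimLevel U (j + 1) | ¬ A ≤ LinearMap.ker φ ∧ u ∈ A} := by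
  have hinf {W : Submodule F E} (hW : W ≤ LinearMap.ker φ) :
      (W ⊔ Submodule.span F {u}) ⊓ LinearMap.ker φ = W := by
    have hdisj : Submodule.span F {u} ⊓ LinearMap.ker φ = ⊥ :=
      (Submodule.disjoint_span_singleton_of_notMem (by simp [hu])).symm.eq_bot
    rw [sup_inf_assoc_of_le _ hW, hdisj, sup_bot_eq]
  refine card_le_card_of_injOn (· ⊔ Submodule.span F {u}) (fun W hW ↦ ?_) fun W hW W' hW' h ↦ ?_
  · simp only [coe_filter, mem_dimLevel, Set.mem_ofPred_eq] at hW
    have huW : u ∉ W := fun h ↦ by simpa [hu] using hW.2 h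
    have hmem : u ∈ W ⊔ Submodule.span F {u} :=
      Submodule.mem_sup_right (Submodule.mem_span_singleton_self u)
    have hker : ¬ W ⊔ Submodule.span F {u} ≤ LinearMap.ker φ :=
      fun h ↦ by simpa [hu] using h hmem
    simp [hU le_sup_left hW.1.1, Submodule.finrank_sup_span_singleton huW, hW.1.2, hker, hmem,
      -sup_le_iff]
  · simp only [coe_filter, Set.mem_ofPred_eq] at hW hW' h
    rw [← hinf hW.2, h, hinf hW'.2]

open Classical in
lemma card_dimLevel_ker_mul_le (hU : IsUpperSet U) {φ : Dual F E} (hφ : φ ≠ 0) :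
    #{W ∈ dimLevel U j | W ≤ LinearMap.ker φ} * Nat.card F ^ (finrank F E - 1) ≤
      #{A ∈ dimLevel U (j + 1) | ¬ A ≤ LinearMap.ker φ} * Nat.card F ^ j := by
  have := Fintype.ofFinite E
  have hone : #{u | φ u = 1} = Nat.card F ^ (finrank F E - 1) := by
    have h := ncard_mem_and_dual_eq_one (A := ⊤) (φ := φ) (by simpa [LinearMap.ker_eq_top])
    simpa [← Set.ncard_coe_finset] using h
  rw [mul_comm, ← hone]
  refine card_mul_le_card_mul (fun (u : E) (A : Submodule F E) ↦ u ∈ A) (fun u hu ↦ ?_)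
    fun A hA ↦ ?_
  · rw [bipartiteAbove, filter_filter]
    exact card_dimLevel_le_ker_le_card_dimLevel_not_le_ker hU (mem_filter.1 hu).2
  · obtain ⟨hA, hAφ⟩ := mem_filter.1 hA
    have h := ncard_mem_and_dual_eq_one hAφ
    rw [(mem_dimLevel.1 hA).2, Nat.add_sub_cancel] at h
    rw [← h, ← Set.ncard_coe_finset]
    apply le_of_eq
    congr 1
    ext u
    simp [bipartiteBelow, and_comm]

lemma card_dimLevel_familyWithin_ker_le_gaussBinom [Finite F] {n : ℕ} (hE : finrank F E = n + 2)
    (hjn : j ≤ n) (hU : IsUpperSet U) {φ : Dual F E} (hφ : φ ≠ 0)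
    (hlt : (#(dimLevel U (j + 2)) : ℚ) < gaussBinom (Nat.card F) (n + 1) (j + 1))
    (hge : gaussBinom (Nat.card F) n (j + 1) ≤
      #(dimLevel (familyWithin U (LinearMap.ker φ)) (j + 2))) :
    #(dimLevel (familyWithin U (LinearMap.ker φ)) (j + 1)) ≤
      gaussBinom (Nat.card F) n j := by
  classical
  have hq : 1 < Nat.card F := Finite.one_lt_card
  have hqpos : (0 : ℚ) < (Nat.card F : ℚ) ^ (n + 1) := by positivity
  have hsplit := card_filter_add_card_filter_not (s := dimLevel U (j + 2)) (· ≤ LinearMap.ker φ)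
  have hshadow := card_dimLevel_ker_mul_le hU hφ (j := j + 1)
  rw [← card_dimLevel_familyWithin] at hsplit hshadow
  rw [hE, Nat.add_sub_cancel_right (n + 1) 1] at hshadow
  rw [gaussBinom_succ_succ' hq n j, ← hsplit, Nat.cast_add] at hlt
  have hout : (#{A ∈ dimLevel U (j + 2) | ¬ A ≤ LinearMap.ker φ} : ℚ) ≤
      (Nat.card F : ℚ) ^ (n - j) * gaussBinom (Nat.card F) n j := by linarith
  refine le_of_mul_le_mul_right ?_ hqpos
  calc
    (#(dimLevel (familyWithin U (LinearMap.ker φ)) (j + 1)) : ℚ) *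
          (Nat.card F : ℚ) ^ (n + 1)
        ≤ #{A ∈ dimLevel U (j + 2) | ¬ A ≤ LinearMap.ker φ} * (Nat.card F : ℚ) ^ (j + 1) := by
      exact_mod_cast hshadow
    _ ≤ (Nat.card F : ℚ) ^ (n - j) * gaussBinom (Nat.card F) n j *
          (Nat.card F : ℚ) ^ (j + 1) := by gcongr
    _ = gaussBinom (Nat.card F) n j * (Nat.card F : ℚ) ^ (n + 1) := by
      rw [show n + 1 = n - j + (j + 1) by lia, pow_add]
      ring

lemma dimLevel_eq_empty_of_dimLevel_finrank_eq_empty (hU : IsUpperSet U)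
    (h : dimLevel U (finrank F E) = ∅) (j : ℕ) : dimLevel U j = ∅ := by
  refine eq_empty_of_forall_notMem fun W hW ↦ ?_
  have htop : ⊤ ∈ dimLevel U (finrank F E) :=
    mem_dimLevel.2 ⟨hU le_top (mem_dimLevel.1 hW).1, finrank_top F E⟩
  simp [h] at htop

lemma card_dimLevel_div_gaussBinom_le_of_forall_ker [Finite F] {n : ℕ}
    (hE : finrank F E = n + 2) (hjn : j < n)
    (hker : ∀ φ : Dual F E, φ ≠ 0 →
      #(dimLevel (familyWithin U (LinearMap.ker φ)) (j + 1)) / gaussBinom (Nat.card F) n j ≤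
        #(dimLevel (familyWithin U (LinearMap.ker φ)) (j + 2)) /
          gaussBinom (Nat.card F) n (j + 1)) :
    #(dimLevel U (j + 1)) / gaussBinom (Nat.card F) (n + 1) j ≤
      #(dimLevel U (j + 2)) / gaussBinom (Nat.card F) (n + 1) (j + 1) := by
  classical
  have hq : 1 < Nat.card F := Finite.one_lt_card
  have : Finite (Dual F E) := Module.finite_of_finite F
  have := Fintype.ofFinite (Dual F E)
  simp only [div_gaussBinom_le_div_gaussBinom_succ_iff hq hjn] at hker
  have hsum := sum_le_sum fun φ (hφ : φ ∈ ({φ | φ ≠ 0} : Finset (Dual F E))) ↦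
    hker φ (mem_filter.1 hφ).2
  rw [← sum_mul, ← sum_mul, sum_card_dimLevel_familyWithin_ker,
    sum_card_dimLevel_familyWithin_ker, hE, show n + 2 - (j + 1) = n + 1 - j by lia,
    show n + 2 - (j + 2) = n - j by lia, mul_right_comm (#(dimLevel U (j + 2)) : ℚ)] at hsum
  rw [div_gaussBinom_le_div_gaussBinom_succ_iff hq (Nat.lt_add_right 1 hjn)]
  exact le_of_mul_le_mul_right hsum (pow_sub_one_pos hq (Nat.sub_ne_zero_of_lt hjn))

lemma card_dimLevel_div_gaussBinom_le_of_card_lt [Finite F] {n : ℕ} (hE : finrank F E = n + 1)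
    (hjn : j < n) (hU : IsUpperSet U)
    (hlt : (#(dimLevel U (j + 2)) : ℚ) < gaussBinom (Nat.card F) n (j + 1)) :
    #(dimLevel U (j + 1)) / gaussBinom (Nat.card F) n j ≤
      #(dimLevel U (j + 2)) / gaussBinom (Nat.card F) n (j + 1) := by
  have hq : 1 < Nat.card F := Finite.one_lt_card
  induction n, hjn using Nat.le_induction generalizing E with
  | base =>
    rw [gaussBinom_self hq, Nat.cast_lt_one, card_eq_zero] at hlt
    simp [dimLevel_eq_empty_of_dimLevel_finrank_eq_empty hU (hE ▸ hlt)]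
  | succ n hjn ih =>
    have hjn' : j ≤ n := Nat.le_of_succ_le hjn
    refine card_dimLevel_div_gaussBinom_le_of_forall_ker hE hjn fun φ hφ ↦ ?_
    obtain hlt' | hge := lt_or_ge
      (#(dimLevel (familyWithin U (LinearMap.ker φ)) (j + 2)) : ℚ)
      (gaussBinom (Nat.card F) n (j + 1))
    · exact ih (finrank_ker_of_ne_zero hE hφ) (isUpperSet_familyWithin hU _) hlt'
    · calc
        _ ≤ (1 : ℚ) := (div_le_one₀ (gaussBinom_pos hq hjn')).2
          (card_dimLevel_familyWithin_ker_le_gaussBinom hE hjn' hU hφ hlt hge)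
        _ ≤ _ := (one_le_div₀ (gaussBinom_pos hq hjn)).2 hge

lemma card_dimLevel_add_card_dimLevel_compl (U : Set (Submodule F E)) (j : ℕ) :
    #(dimLevel U j) + #(dimLevel Uᶜ j) =
      #(dimLevel (Set.univ : Set (Submodule F E)) j) := by
  classical
  rw [← card_filter_add_card_filter_not (s := dimLevel (Set.univ : Set (Submodule F E)) j) (· ∈ U)]
  congr 2 <;> ext W <;> simp [and_comm]

open Classical in
lemma pow_le_card_dimLevel_compl_isCompl {d e : ℕ} (hE : finrank F E = d + e)
    (hU : U.Intersecting) {C : Submodule F E} (hC : C ∈ dimLevel U e) :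
    Nat.card F ^ (d * e) ≤ #{T ∈ dimLevel Uᶜ d | IsCompl C T} := by
  obtain ⟨hCU, rfl⟩ := mem_dimLevel.1 hC
  have hcard := ncard_isCompl C
  rw [hE, Nat.add_sub_cancel_right] at hcard
  rw [← hcard, ← Set.ncard_coe_finset]
  refine Set.ncard_le_ncard (fun T hT ↦ ?_) (Set.toFinite _)
  have hdim := Submodule.finrank_add_eq_of_isCompl hT
  have hTU : T ∉ U := fun hTU ↦ hU hCU hTU (IsCompl.disjoint hT)
  simp only [coe_filter, mem_dimLevel, Set.mem_ofPred_eq]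
  exact ⟨⟨hTU, by lia⟩, hT⟩

open Classical in
lemma card_dimLevel_isCompl_mul_le [Finite F] {e : ℕ} (hU : U.Intersecting) {T : Submodule F E}
    (hE : finrank F E = finrank F T + e) (he : e ≤ finrank F T) :
    #{C ∈ dimLevel U e | IsCompl C T} * Nat.card F ^ finrank F T ≤
      Nat.card F ^ (finrank F T * e) := by
  have hcard := ncard_inter_isCompl_mul_le hU (T := T) (by lia)
  rw [ncard_isCompl, hE, Nat.add_sub_cancel_left, mul_comm e] at hcard
  refine le_trans (Nat.mul_le_mul_right _ ?_) hcard
  rw [← Set.ncard_coe_finset]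
  refine Set.ncard_le_ncard (fun C hC ↦ ?_) (Set.toFinite _)
  simp only [coe_filter, mem_dimLevel, Set.mem_ofPred_eq] at hC
  exact ⟨hC.1.1, hC.2.symm⟩

lemma pow_mul_card_dimLevel_le_card_dimLevel_compl [Finite F] {d e : ℕ}
    (hE : finrank F E = d + e) (hed : e ≤ d) (hU : U.Intersecting) :
    Nat.card F ^ d * #(dimLevel U e) ≤ #(dimLevel Uᶜ d) := by
  classical
  have hdouble : #(dimLevel U e) * Nat.card F ^ (d * e) ≤
      #(dimLevel Uᶜ d) * (Nat.card F ^ (d * e) / Nat.card F ^ d) := by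
    refine card_mul_le_card_mul IsCompl
      (fun C hC ↦ pow_le_card_dimLevel_compl_isCompl hE hU hC) fun T hT ↦ ?_
    obtain ⟨-, rfl⟩ := mem_dimLevel.1 hT
    rw [Nat.le_div_iff_mul_le (Nat.pow_pos Nat.card_pos)]
    exact card_dimLevel_isCompl_mul_le hU hE hed
  refine Nat.le_of_mul_le_mul_right (c := Nat.card F ^ (d * e)) ?_ (Nat.pow_pos Nat.card_pos)
  calc
    Nat.card F ^ d * #(dimLevel U e) * Nat.card F ^ (d * e)
        = #(dimLevel U e) * Nat.card F ^ (d * e) * Nat.card F ^ d := by ring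
    _ ≤ #(dimLevel Uᶜ d) * (Nat.card F ^ (d * e) / Nat.card F ^ d) * Nat.card F ^ d := by gcongr
    _ ≤ #(dimLevel Uᶜ d) * Nat.card F ^ (d * e) := by
      rw [mul_assoc]
      gcongr
      exact Nat.div_mul_le_self _ _

lemma gaussBinom_le_card_dimLevel_of_le [Finite F] {n i : ℕ} (hE : finrank F E = n + 1)
    (hU : IsUpperSet U) (hj : gaussBinom (Nat.card F) n j ≤ #(dimLevel U (j + 1)))
    (hji : j ≤ i) (hin : i ≤ n) : gaussBinom (Nat.card F) n i ≤ #(dimLevel U (i + 1)) := by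
  have hq : 1 < Nat.card F := Finite.one_lt_card
  induction i, hji using Nat.le_induction with
  | base => exact hj
  | succ i _ ih =>
    by_contra! hlt
    have hratio := card_dimLevel_div_gaussBinom_le_of_card_lt hE hin hU hlt
    have hone := (one_le_div₀ (gaussBinom_pos hq (Nat.le_of_succ_le hin))).2
      (ih (Nat.le_of_succ_le hin))
    have hlt_one := (div_lt_one₀ (gaussBinom_pos hq hin)).2 hlt
    linarith

lemma card_dimLevel_le_gaussBinom_of_intersecting_of_isUpperSet [Finite F] {n : ℕ}
    (hE : finrank F E = n + 1) (hj : 2 * (j + 1) ≤ n + 1) (hU : U.Intersecting)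
    (hupper : IsUpperSet U) :
    #(dimLevel U (j + 1)) ≤ gaussBinom (Nat.card F) n j := by
  have hq : 1 < Nat.card F := Finite.one_lt_card
  by_contra! hlt
  obtain ⟨d, rfl⟩ : ∃ d, n = d + 1 + j := ⟨n - (j + 1), by lia⟩
  have hd := gaussBinom_le_card_dimLevel_of_le hE hupper hlt.le (i := d) (by lia) (by lia)
  have hcompl := pow_mul_card_dimLevel_le_card_dimLevel_compl (d := d + 1) (e := j + 1)
    (by lia) (by lia) hU
  have hcard : (#(dimLevel U (d + 1)) + #(dimLevel Uᶜ (d + 1)) : ℚ) =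
      gaussBinom (Nat.card F) (d + 1 + j) d +
        (Nat.card F : ℚ) ^ (d + 1) * gaussBinom (Nat.card F) (d + 1 + j) j := by
    rw [← gaussBinom_symm_add hq, ← gaussBinom_succ_succ hq (d + 1 + j) d,
      ← card_dimLevel_univ hE (by lia), ← card_dimLevel_add_card_dimLevel_compl U, Nat.cast_add]
  have hmul : (Nat.card F : ℚ) ^ (d + 1) * gaussBinom (Nat.card F) (d + 1 + j) j <
      (Nat.card F : ℚ) ^ (d + 1) * #(dimLevel U (j + 1)) := by gcongr
  have hcompl' : (Nat.card F : ℚ) ^ (d + 1) * #(dimLevel U (j + 1)) ≤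
      #(dimLevel Uᶜ (d + 1)) := by exact_mod_cast hcompl
  linarith

lemma card_dimLevel_le_gaussBinom_of_intersecting [Finite F] {n : ℕ}
    (hE : finrank F E = n + 1) (hj : 2 * (j + 1) ≤ n + 1) (hU : U.Intersecting) :
    #(dimLevel U (j + 1)) ≤ gaussBinom (Nat.card F) n j :=
  (Nat.cast_le.2 (card_le_card (dimLevel_mono subset_upperClosure _))).trans <|
    card_dimLevel_le_gaussBinom_of_intersecting_of_isUpperSet hE hj (intersecting_upperClosure hU)
      (upperClosure U).upper

lemma card_dimLevel_div_gaussBinom_le_succ [Finite F] {n : ℕ} (hE : finrank F E = n + 1)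
    (hj : 2 * (j + 2) ≤ n + 1) (hU : U.Intersecting) (hupper : IsUpperSet U) :
    #(dimLevel U (j + 1)) / gaussBinom (Nat.card F) n j ≤
      #(dimLevel U (j + 2)) / gaussBinom (Nat.card F) n (j + 1) := by
  have hq : 1 < Nat.card F := Finite.one_lt_card
  obtain hlt | heq := (card_dimLevel_le_gaussBinom_of_intersecting hE hj hU).lt_or_eq
  · exact card_dimLevel_div_gaussBinom_le_of_card_lt hE (by lia) hupper hlt
  · rw [heq, div_self (gaussBinom_pos hq (by lia)).ne', div_le_one₀ (gaussBinom_pos hq (by lia))]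
    exact card_dimLevel_le_gaussBinom_of_intersecting hE (by lia) hU

/-- The level of dimension `m` of the upper set generated by `A`: the subspaces of dimension `m`
containing a member of `A`. It receives the members of `A` pushed up to dimension `m`. -/
noncomputable def dimLevelAbove (A : Finset (Submodule F E)) (m : ℕ) : Finset (Submodule F E) :=
  dimLevel (upperClosure (A : Set (Submodule F E))) m

open Classical in
lemma card_dimLevelAbove_add_card_sdiff_le {A B : Finset (Submodule F E)} {m : ℕ}
    (hA : IsAntichain (· ≤ ·) (A : Set (Submodule F E))) (hBA : B ⊆ A)
    (hAB : ∀ W ∈ A \ B, finrank F W = m) :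
    #(dimLevelAbove B m) + #(A \ B) ≤ #(dimLevelAbove A m) := by
  rw [← card_union_of_disjoint]
  · refine card_le_card (union_subset (dimLevel_mono (upperClosure_anti hBA) m) fun W hW ↦ ?_)
    exact mem_dimLevel.2 ⟨subset_upperClosure (mem_sdiff.1 hW).1, hAB W hW⟩
  · refine disjoint_left.2 fun W hW hWA ↦ ?_
    obtain ⟨⟨W', hW'B, hle⟩, -⟩ := mem_dimLevel.1 hW
    have heq : W' = W := hA.eq (hBA hW'B) (mem_sdiff.1 hWA).1 hle
    exact (mem_sdiff.1 hWA).2 (heq ▸ hW'B)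

open Classical in
lemma sum_inv_gaussBinom_le_of_subset [Finite F] {n i : ℕ} (hin : i ≤ n)
    {A B : Finset (Submodule F E)} (hA : IsAntichain (· ≤ ·) (A : Set (Submodule F E)))
    (hBA : B ⊆ A) (hAB : ∀ W ∈ A \ B, finrank F W = i + 1)
    (hlow : ∑ W ∈ B, (gaussBinom (Nat.card F) n (finrank F W - 1))⁻¹ ≤
      #(dimLevelAbove B (i + 1)) / gaussBinom (Nat.card F) n i) :
    ∑ W ∈ A, (gaussBinom (Nat.card F) n (finrank F W - 1))⁻¹ ≤
      #(dimLevelAbove A (i + 1)) / gaussBinom (Nat.card F) n i := by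
  have hpos := gaussBinom_pos (q := Nat.card F) Finite.one_lt_card hin
  have htop : ∑ W ∈ A \ B, (gaussBinom (Nat.card F) n (finrank F W - 1))⁻¹ =
      #(A \ B) / gaussBinom (Nat.card F) n i := by
    rw [div_eq_mul_inv, ← nsmul_eq_mul, ← sum_const]
    refine sum_congr rfl fun W hW ↦ ?_
    rw [hAB W hW, Nat.add_sub_cancel]
  rw [← sum_sdiff hBA, htop, add_comm]
  grw [hlow, ← card_dimLevelAbove_add_card_sdiff_le hA hBA hAB]
  rw [Nat.cast_add, add_div]

lemma sum_inv_gaussBinom_le_card_dimLevelAbove_div [Finite F] {n i : ℕ}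
    (hE : finrank F E = n + 1) (hi : 2 * (i + 1) ≤ n + 1) {A : Finset (Submodule F E)}
    (hint : (A : Set (Submodule F E)).Intersecting)
    (hA : IsAntichain (· ≤ ·) (A : Set (Submodule F E))) (hdim : ∀ W ∈ A, finrank F W ≤ i + 1) :
    ∑ W ∈ A, (gaussBinom (Nat.card F) n (finrank F W - 1))⁻¹ ≤
      #(dimLevelAbove A (i + 1)) / gaussBinom (Nat.card F) n i := by
  induction i generalizing A with
  | zero =>
    refine sum_inv_gaussBinom_le_of_subset (by lia) hA (empty_subset A) (fun W hW ↦ ?_) (by simp)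
    have hWA := (mem_sdiff.1 hW).1
    exact le_antisymm (hdim W hWA) (Nat.one_le_iff_ne_zero.2 fun h ↦
      hint.ne_bot hWA (Submodule.finrank_eq_zero.1 h))
  | succ i ih =>
    let B : Finset (Submodule F E) := A.filter fun W : Submodule F E ↦ finrank F W ≤ i + 1
    have hBA : B ⊆ A := filter_subset _ _
    have hBint : (B : Set (Submodule F E)).Intersecting := hint.mono (coe_subset.2 hBA)
    refine sum_inv_gaussBinom_le_of_subset (by lia) hA hBA (fun W hW ↦ ?_) ?_
    · obtain ⟨hWA, hWB⟩ := mem_sdiff.1 hW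
      have hlow : ¬ finrank F W ≤ i + 1 := fun h ↦ hWB (mem_filter.2 ⟨hWA, h⟩)
      have hhigh := hdim W hWA
      lia
    · exact (ih (by lia) hBint (hA.subset (coe_subset.2 hBA)) fun W hW ↦ (mem_filter.1 hW).2).trans
        (card_dimLevel_div_gaussBinom_le_succ hE hi (intersecting_upperClosure hBint)
          (upperClosure (B : Set (Submodule F E))).upper)

lemma sum_inv_gaussBinom_le_one_of_isAntichain [Finite F] {n m : ℕ} (hE : finrank F E = n + 1)
    (hm : 2 * m ≤ n + 1) {A : Finset (Submodule F E)}
    (hint : (A : Set (Submodule F E)).Intersecting)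
    (hA : IsAntichain (· ≤ ·) (A : Set (Submodule F E))) (hdim : ∀ W ∈ A, finrank F W ≤ m) :
    ∑ W ∈ A, (gaussBinom (Nat.card F) n (finrank F W - 1))⁻¹ ≤ 1 := by
  obtain rfl | ⟨i, rfl⟩ : m = 0 ∨ ∃ i, m = i + 1 :=
    m.eq_zero_or_eq_sub_one_add_one.imp_right (⟨_, ·⟩)
  · have hempty : A = ∅ := eq_empty_of_forall_notMem fun W hW ↦
      hint.ne_bot hW (Submodule.finrank_eq_zero.1 (Nat.le_zero.1 (hdim W hW)))
    simp [hempty]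
  · refine (sum_inv_gaussBinom_le_card_dimLevelAbove_div hE hm hint hA hdim).trans ?_
    rw [div_le_one₀ (gaussBinom_pos Finite.one_lt_card (by lia))]
    exact card_dimLevel_le_gaussBinom_of_intersecting hE hm (intersecting_upperClosure hint)

end DimLevel

theorem intersecting_kSperner_LYM_general {F E : Type*} [Field F] [Finite F] [AddCommGroup E]
    [Module F E] [FiniteDimensional F E] (k : ℕ) (V : Finset (Submodule F E))
    (hint : ∀ U ∈ V, ∀ W ∈ V, U ≠ W → U ⊓ W ≠ ⊥)
    (hSperner : ∀ c : Fin (k + 1) → Submodule F E, (∀ i, c i ∈ V) → ¬ StrictMono c) :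
    ∑ j ∈ Icc 1 (finrank F E / 2),
        (#(V.filter fun W : Submodule F E ↦ finrank F W = j) : ℚ) /
          gaussBinom (Nat.card F) (finrank F E - 1) (j - 1) ≤ k := by
  have : Finite E := Module.finite_of_finite F
  obtain hE | hE := Nat.eq_zero_or_pos (finrank F E)
  · simp [hE]
  let A : Finset (Submodule F E) :=
    V.filter fun W : Submodule F E ↦ finrank F W ∈ Icc 1 (finrank F E / 2)
  have hdim (W) (hW : W ∈ A) : 1 ≤ finrank F W ∧ finrank F W ≤ finrank F E / 2 :=
    mem_Icc.1 (mem_filter.1 hW).2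
  have hA : (A : Set (Submodule F E)).Intersecting := by
    intro U hU W hW hUW
    obtain rfl | hne := eq_or_ne U W
    · have hpos := (hdim U hU).1
      rw [disjoint_self.1 hUW, finrank_bot] at hpos
      lia
    · exact hint U (mem_filter.1 hU).1 W (mem_filter.1 hW).1 hne hUW.eq_bot
  calc
    _ = ∑ W ∈ A, (gaussBinom (Nat.card F) (finrank F E - 1) (finrank F W - 1))⁻¹ := by
      rw [← sum_fiberwise_eq_sum_filter]
      refine sum_congr rfl fun j _ ↦ ?_
      rw [div_eq_mul_inv, ← nsmul_eq_mul, ← sum_const]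
      exact sum_congr rfl fun W hW ↦ by rw [(mem_filter.1 hW).2]
    _ ≤ k • (1 : ℚ) := by
      refine sum_le_nsmul_of_forall_antichain _ 1
        (fun c hc ↦ hSperner c fun i ↦ (mem_filter.1 (hc i)).1) fun B hBA hB ↦ ?_
      exact sum_inv_gaussBinom_le_one_of_isAntichain (m := finrank F E / 2)
        (Nat.sub_add_cancel hE).symm (by lia) (hA.mono (coe_subset.2 hBA)) hB
        fun W hW ↦ (hdim W (hBA hW)).2
    _ = k := by simp

/-- LYM-type inequality for an intersecting `k`-Sperner family of subspaces of
`F_q^n` all of whose members have dimension at most `⌊n/2⌋`. -/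
theorem intersecting_kSperner_LYM
    (F : Type*) [Field F] [Fintype F] (n k : ℕ) (hk : 1 ≤ k)
    (V : Finset (Submodule F (Fin n → F)))
    (hint : ∀ U ∈ V, ∀ W ∈ V, U ≠ W → U ⊓ W ≠ ⊥)
    (hSperner : ∀ c : Fin (k + 1) → Submodule F (Fin n → F),
      (∀ i, c i ∈ V) → ¬ StrictMono c)
    (hdim : ∀ W ∈ V, Module.finrank F W ≤ n / 2) :
    ∑ j ∈ Finset.Icc 1 (n / 2),
        ((V.filter (fun W : Submodule F (Fin n → F) => Module.finrank F W = j)).card : ℚ) /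
          gaussBinom (Fintype.card F) (n - 1) (j - 1) ≤ (k : ℚ) := by
  simpa using intersecting_kSperner_LYM_general k V hint hSperner
end
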